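/- For every real vector space X, every function g : X → EReal and every point x ∈ X, the supremum of μ[g] over all μ ∈ M(x) equals the concave envelope g^♯ evaluated at x: sup_{μ ∈ M(x)} μ[g] = g^♯(x). -/

import Mathlib

/-- An `EReal`-valued function on a real vector space is concave
(with the convention `⊤ + ⊥ = ⊥` of `EReal`). -/
def IsEConcave {X : Type*} [AddCommGroup X] [Module ℝ X] (ψ : X → EReal) : Prop :=
  ∀ x y : X, ∀ a b : ℝ, 0 ≤ a → 0 ≤ b → a + b = 1 →
    (a : EReal) * ψ x + (b : EReal) * ψ y ≤ ψ (a • x + b • y)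

/-- The concave envelope `g^♯` of `g : X → EReal`: the pointwise infimum of all
concave functions dominating `g`. -/
noncomputable def concaveEnvelope {X : Type*} [AddCommGroup X] [Module ℝ X]
    (g : X → EReal) (x : X) : EReal :=
  ⨅ ψ : {ψ : X → EReal // IsEConcave ψ ∧ ∀ y, g y ≤ ψ y}, ψ.1 x
/-- A finitely supported probability measure `μ = Σ λᵢ δ_{xᵢ}` on `X` with
barycenter `x`; an element of `M(x)`. -/
structure SimpleProb (X : Type*) [AddCommGroup X] [Module ℝ X] (x : X) where
  supp : Finset X
  w : X → ℝ
  nonneg : ∀ y, 0 ≤ w y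
  zero_off : ∀ y ∉ supp, w y = 0
  total : ∑ y ∈ supp, w y = 1
  bary : ∑ y ∈ supp, w y • y = x

/-- The integral `μ[g]` of an `EReal`-valued function under a finitely
supported probability measure, as a finite sum in `EReal`. -/
noncomputable def SimpleProb.exp {X : Type*} [AddCommGroup X] [Module ℝ X] {x : X}
    (μ : SimpleProb X x) (g : X → EReal) : EReal :=
  ∑ y ∈ μ.supp, (μ.w y : EReal) * g y

/-!
Jensen's inequality bounds `μ[g] ≤ μ[ψ]` by `ψ x` for every concave `ψ ≥ g` and `μ ∈ M(x)`.
Conversely, `x ↦ ⨆ μ ∈ M(x), μ[g]` is itself such a `ψ`: it dominates `g` because of the Dirac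
masses, and it is concave because a mixture of measures has the mixture of their barycenters as
barycenter. Neither half loses anything at infinite values, because multiplication by a finite
nonnegative constant distributes over all sums in `EReal`, and the convention `⊤ + ⊥ = ⊥` makes
`⨆ i, u i + ⨆ j, v j` the least upper bound of the sums `u i + v j`.
-/

section ExtendedReals

variable {ι κ : Type*} {c : EReal}

lemma ereal_mul_sum (hc : 0 ≤ c) (hc_top : c ≠ ⊤) (s : Finset ι) (f : ι → EReal) :
    c * ∑ i ∈ s, f i = ∑ i ∈ s, c * f i :=
  map_sum ({ toFun := (c * ·)
             map_zero' := mul_zero c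
             map_add' := EReal.left_distrib_of_nonneg_of_ne_top hc hc_top } : EReal →+ EReal) f s

lemma ereal_mul_iSup [Nonempty ι] (hc : 0 ≤ c) (hc_top : c ≠ ⊤) (f : ι → EReal) :
    c * ⨆ i, f i = ⨆ i, c * f i := by
  rcases hc.eq_or_lt with rfl | hc_pos
  · simp only [zero_mul, ciSup_const]
  have hcont : ContinuousAt (c * ·) (⨆ i, f i) :=
    (EReal.continuousAt_mul (p := (c, ⨆ i, f i)) (.inl hc_pos.ne') (.inl hc_pos.ne')
      (.inl (EReal.bot_lt_zero.trans hc_pos).ne') (.inl hc_top)).comp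
        (continuousAt_const.prodMk continuousAt_id)
  exact Monotone.map_ciSup_of_continuousAt hcont fun _ _ h ↦ mul_le_mul_of_nonneg_left h hc

lemma ereal_iSup_add_iSup_le {u : ι → EReal} {v : κ → EReal} (h : ∀ i j, u i + v j ≤ c) :
    (⨆ i, u i) + ⨆ j, v j ≤ c := by
  refine EReal.add_le_of_forall_lt fun p hp q hq ↦ ?_
  obtain ⟨i, hi⟩ := lt_iSup_iff.mp hp
  obtain ⟨j, hj⟩ := lt_iSup_iff.mp hq
  exact (add_le_add hi.le hj.le).trans (h i j)

end ExtendedReals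

section Envelope

variable {X : Type*} [AddCommGroup X] [Module ℝ X] {g ψ : X → EReal}

lemma concaveEnvelope_le (hψ : IsEConcave ψ) (hg : ∀ y, g y ≤ ψ y) (x : X) :
    concaveEnvelope g x ≤ ψ x :=
  iInf_le_of_le ⟨ψ, hψ, hg⟩ le_rfl

lemma le_concaveEnvelope {x : X} {c : EReal}
    (h : ∀ ψ : X → EReal, IsEConcave ψ → (∀ y, g y ≤ ψ y) → c ≤ ψ x) :
    c ≤ concaveEnvelope g x :=
  le_iInf fun ψ ↦ h ψ.1 ψ.2.1 ψ.2.2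

end Envelope

namespace IsEConcave

variable {X ι : Type*} [AddCommGroup X] [Module ℝ X] {ψ : X → EReal}

lemma mul_add_mul_le (hψ : IsEConcave ψ) {a b : ℝ} (ha : 0 ≤ a) (hb : 0 ≤ b) (hab : 0 < a + b)
    (x y : X) :
    (a : EReal) * ψ x + (b : EReal) * ψ y ≤
      ((a + b : ℝ) : EReal) * ψ ((a / (a + b)) • x + (b / (a + b)) • y) := by
  have hab_nonneg : (0 : EReal) ≤ ((a + b : ℝ) : EReal) := EReal.coe_nonneg.mpr hab.le
  have hsum : a / (a + b) + b / (a + b) = 1 := by rw [← add_div, div_self hab.ne']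
  calc (a : EReal) * ψ x + (b : EReal) * ψ y
      = ((a + b : ℝ) : EReal) *
          (((a / (a + b) : ℝ) : EReal) * ψ x + ((b / (a + b) : ℝ) : EReal) * ψ y) := by
        rw [EReal.left_distrib_of_nonneg_of_ne_top hab_nonneg (EReal.coe_ne_top _),
          ← mul_assoc, ← mul_assoc, ← EReal.coe_mul, ← EReal.coe_mul,
          mul_div_cancel₀ _ hab.ne', mul_div_cancel₀ _ hab.ne']
    _ ≤ _ := mul_le_mul_of_nonneg_left
        (hψ x y _ _ (div_nonneg ha hab.le) (div_nonneg hb hab.le) hsum) hab_nonneg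

lemma sum_mul_le_mul_centerMass (hψ : IsEConcave ψ) {s : Finset ι} (hs : s.Nonempty)
    {w : ι → ℝ} (hw : ∀ i ∈ s, 0 < w i) (p : ι → X) :
    ∑ i ∈ s, (w i : EReal) * ψ (p i) ≤
      ((∑ i ∈ s, w i : ℝ) : EReal) * ψ (s.centerMass w p) := by
  classical
  induction hs using Finset.Nonempty.cons_induction with
  | singleton i =>
    rw [Finset.sum_singleton, Finset.sum_singleton,
      Finset.centerMass_singleton i p (hw i (Finset.mem_singleton_self i)).ne']
  | cons i s hi hs ih =>
    rw [Finset.forall_mem_cons] at hw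
    have hW : 0 < ∑ j ∈ s, w j := Finset.sum_pos hw.2 hs
    rw [Finset.sum_cons, Finset.sum_cons, Finset.cons_eq_insert,
      Finset.centerMass_insert i s p hi hW.ne']
    exact (add_le_add_right (ih hw.2) _).trans
      (hψ.mul_add_mul_le hw.1.le hW.le (add_pos hw.1 hW) _ _)

lemma le_map_sum (hψ : IsEConcave ψ) {s : Finset ι} {w : ι → ℝ} (hw : ∀ i ∈ s, 0 ≤ w i)
    (hw_sum : ∑ i ∈ s, w i = 1) (p : ι → X) :
    ∑ i ∈ s, (w i : EReal) * ψ (p i) ≤ ψ (∑ i ∈ s, w i • p i) := by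
  classical
  have ht_sum : ∑ i ∈ s with w i ≠ 0, w i = 1 := by rw [Finset.sum_filter_ne_zero, hw_sum]
  have ht : {i ∈ s | w i ≠ 0}.Nonempty :=
    Finset.nonempty_of_sum_ne_zero (ht_sum.trans_ne one_ne_zero)
  have hw_pos : ∀ i ∈ {i ∈ s | w i ≠ 0}, 0 < w i := fun i hi ↦
    have ⟨his, hwi⟩ := Finset.mem_filter.mp hi
    (hw i his).lt_of_ne' hwi
  calc ∑ i ∈ s, (w i : EReal) * ψ (p i)
      = ∑ i ∈ s with w i ≠ 0, (w i : EReal) * ψ (p i) :=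
        (Finset.sum_filter_of_ne fun i _ h ↦
          EReal.coe_ne_zero.mp (left_ne_zero_of_mul h)).symm
    _ ≤ ψ ({i ∈ s | w i ≠ 0}.centerMass w p) := by
        simpa only [ht_sum, EReal.coe_one, one_mul] using
          hψ.sum_mul_le_mul_centerMass ht hw_pos p
    _ = ψ (∑ i ∈ s, w i • p i) := by
        rw [Finset.centerMass_filter_ne_zero, Finset.centerMass_eq_of_sum_1 _ _ hw_sum]

end IsEConcave

namespace SimpleProb

variable {X : Type*} [AddCommGroup X] [Module ℝ X] {x y : X}

lemma sum_w_of_supp_subset (μ : SimpleProb X x) {s : Finset X} (hs : μ.supp ⊆ s) :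
    ∑ z ∈ s, μ.w z = 1 :=
  (Finset.sum_subset hs fun z _ hz ↦ μ.zero_off z hz).symm.trans μ.total

lemma sum_w_smul_of_supp_subset (μ : SimpleProb X x) {s : Finset X} (hs : μ.supp ⊆ s) :
    ∑ z ∈ s, μ.w z • z = x := by
  rw [← Finset.sum_subset hs fun z _ hz ↦ by rw [μ.zero_off z hz, zero_smul], μ.bary]

lemma exp_eq_sum_of_supp_subset (μ : SimpleProb X x) {s : Finset X} (hs : μ.supp ⊆ s)
    (g : X → EReal) : μ.exp g = ∑ z ∈ s, (μ.w z : EReal) * g z :=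
  Finset.sum_subset hs fun z _ hz ↦ by rw [μ.zero_off z hz, EReal.coe_zero, zero_mul]

lemma exp_mono (μ : SimpleProb X x) {g₁ g₂ : X → EReal} (hg : ∀ z, g₁ z ≤ g₂ z) :
    μ.exp g₁ ≤ μ.exp g₂ :=
  Finset.sum_le_sum fun z _ ↦
    mul_le_mul_of_nonneg_left (hg z) (EReal.coe_nonneg.mpr (μ.nonneg z))

lemma exp_le_of_isEConcave (μ : SimpleProb X x) {ψ : X → EReal} (hψ : IsEConcave ψ) :
    μ.exp ψ ≤ ψ x :=
  (hψ.le_map_sum (fun z _ ↦ μ.nonneg z) μ.total id).trans_eq (congrArg ψ μ.bary)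

open Classical in
/-- The Dirac mass `δ_x`, as an element of `M(x)`. -/
noncomputable def dirac (x : X) : SimpleProb X x where
  supp := {x}
  w := Pi.single x 1
  nonneg := (Pi.single_nonneg.mpr zero_le_one : (0 : X → ℝ) ≤ Pi.single x 1)
  zero_off _ hy := Pi.single_eq_of_ne (Finset.notMem_singleton.mp hy) 1
  total := by rw [Finset.sum_singleton, Pi.single_eq_same]
  bary := by rw [Finset.sum_singleton, Pi.single_eq_same, one_smul]

instance : Nonempty (SimpleProb X x) := ⟨dirac x⟩

lemma exp_dirac (g : X → EReal) (x : X) : (dirac x).exp g = g x := by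
  simp only [exp, dirac, Finset.sum_singleton, Pi.single_eq_same, EReal.coe_one, one_mul]

open Classical in
/-- The mixture `a μ + b ν` of two simple probabilities, whose barycenter is the corresponding
convex combination of the barycenters. -/
noncomputable def mix (μ : SimpleProb X x) (ν : SimpleProb X y) {a b : ℝ} (ha : 0 ≤ a)
    (hb : 0 ≤ b) (hab : a + b = 1) : SimpleProb X (a • x + b • y) where
  supp := μ.supp ∪ ν.supp
  w z := a * μ.w z + b * ν.w z
  nonneg z := add_nonneg (mul_nonneg ha (μ.nonneg z)) (mul_nonneg hb (ν.nonneg z))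
  zero_off z hz := by
    rw [Finset.notMem_union] at hz
    rw [μ.zero_off z hz.1, ν.zero_off z hz.2, mul_zero, mul_zero, add_zero]
  total := by
    rw [Finset.sum_add_distrib, ← Finset.mul_sum, ← Finset.mul_sum,
      μ.sum_w_of_supp_subset Finset.subset_union_left,
      ν.sum_w_of_supp_subset Finset.subset_union_right, mul_one, mul_one, hab]
  bary := by
    simp only [add_smul, mul_smul]
    rw [Finset.sum_add_distrib, ← Finset.smul_sum, ← Finset.smul_sum,
      μ.sum_w_smul_of_supp_subset Finset.subset_union_left,
      ν.sum_w_smul_of_supp_subset Finset.subset_union_right]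

open Classical in
lemma exp_mix (μ : SimpleProb X x) (ν : SimpleProb X y) {a b : ℝ} (ha : 0 ≤ a) (hb : 0 ≤ b)
    (hab : a + b = 1) (g : X → EReal) :
    (μ.mix ν ha hb hab).exp g = (a : EReal) * μ.exp g + (b : EReal) * ν.exp g := by
  have hw (z : X) : ((a * μ.w z + b * ν.w z : ℝ) : EReal) * g z =
      (a : EReal) * ((μ.w z : EReal) * g z) + (b : EReal) * ((ν.w z : EReal) * g z) := by
    rw [EReal.coe_add, EReal.right_distrib_of_nonneg
        (EReal.coe_nonneg.mpr (mul_nonneg ha (μ.nonneg z)))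
        (EReal.coe_nonneg.mpr (mul_nonneg hb (ν.nonneg z))),
      EReal.coe_mul, EReal.coe_mul, mul_assoc, mul_assoc]
  calc (μ.mix ν ha hb hab).exp g
      = ∑ z ∈ μ.supp ∪ ν.supp, ((a * μ.w z + b * ν.w z : ℝ) : EReal) * g z := rfl
    _ = (a : EReal) * ∑ z ∈ μ.supp ∪ ν.supp, (μ.w z : EReal) * g z +
          (b : EReal) * ∑ z ∈ μ.supp ∪ ν.supp, (ν.w z : EReal) * g z := by
        rw [ereal_mul_sum (EReal.coe_nonneg.mpr ha) (EReal.coe_ne_top a),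
          ereal_mul_sum (EReal.coe_nonneg.mpr hb) (EReal.coe_ne_top b),
          ← Finset.sum_add_distrib]
        exact Finset.sum_congr rfl fun z _ ↦ hw z
    _ = (a : EReal) * μ.exp g + (b : EReal) * ν.exp g := by
        rw [← μ.exp_eq_sum_of_supp_subset Finset.subset_union_left,
          ← ν.exp_eq_sum_of_supp_subset Finset.subset_union_right]

lemma le_iSup_exp (g : X → EReal) (x : X) : g x ≤ ⨆ μ : SimpleProb X x, μ.exp g :=
  le_iSup_of_le (dirac x) (exp_dirac g x).ge

lemma isEConcave_iSup_exp (g : X → EReal) :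
    IsEConcave fun x ↦ ⨆ μ : SimpleProb X x, μ.exp g := by
  intro x y a b ha hb hab
  simp only [ereal_mul_iSup (EReal.coe_nonneg.mpr ha) (EReal.coe_ne_top a),
    ereal_mul_iSup (EReal.coe_nonneg.mpr hb) (EReal.coe_ne_top b)]
  exact ereal_iSup_add_iSup_le fun μ ν ↦
    le_iSup_of_le (μ.mix ν ha hb hab) (μ.exp_mix ν ha hb hab g).ge

end SimpleProb

/-- For every real vector space `X`, every `g : X → EReal` and every
`x ∈ X`, the supremum of `μ[g]` over all finitely supported probability measures `μ`
with barycenter `x` equals the concave envelope `g^♯(x)`. -/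
theorem sup_simpleProb_eq_concaveEnvelope {X : Type*} [AddCommGroup X] [Module ℝ X]
    (g : X → EReal) (x : X) :
    (⨆ μ : SimpleProb X x, μ.exp g) = concaveEnvelope g x := by
  apply le_antisymm
  · exact iSup_le fun μ ↦ le_concaveEnvelope fun ψ hψ hg ↦
      (μ.exp_mono hg).trans (μ.exp_le_of_isEConcave hψ)
  · exact concaveEnvelope_le (SimpleProb.isEConcave_iSup_exp g) (SimpleProb.le_iSup_exp g) x
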